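/- Let A be a complex unital Banach algebra, let a ∈ A be ag-Drazin invertible, and let b ∈ A be quasinilpotent with ab = ba. Then a + b is ag-Drazin invertible. -/

import Mathlib

open Filter Topology

/-- An element of a complex Banach algebra is quasinilpotent if its spectrum is `{0}`. -/
def IsQuasinilpotent {A : Type*} [NormedRing A] [NormedAlgebra ℂ A] (b : A) : Prop :=
  spectrum ℂ b = {0}

/-- `a` is generalized Drazin invertible. -/
def IsGDrazinInv {A : Type*} [NormedRing A] [NormedAlgebra ℂ A] (a : A) : Prop :=
  ∃ x : A, a * x = x * a ∧ x * a * x = x ∧ IsQuasinilpotent (a - a ^ 2 * x)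

/-- `a ∈ A^acc`: `a - λ1` is generalized Drazin invertible for all nonzero `λ`. -/
def MemAcc {A : Type*} [NormedRing A] [NormedAlgebra ℂ A] (a : A) : Prop :=
  ∀ l : ℂ, l ≠ 0 → IsGDrazinInv (a - l • (1 : A))

/-- `x` is an ag-Drazin inverse of `a`. -/
def IsAgDrazinInverseOf {A : Type*} [NormedRing A] [NormedAlgebra ℂ A] (x a : A) : Prop :=
  a * x = x * a ∧ x * a * x = x ∧ MemAcc (a - a ^ 2 * x)

/-- `a` is ag-Drazin invertible. -/
def IsAgDrazinInv {A : Type*} [NormedRing A] [NormedAlgebra ℂ A] (a : A) : Prop :=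
  ∃ x : A, IsAgDrazinInverseOf x a

/-- The generalized Drazin spectrum. -/
def gDrazinSpectrum {A : Type*} [NormedRing A] [NormedAlgebra ℂ A] (a : A) : Set ℂ :=
  {l : ℂ | ¬ IsGDrazinInv (a - l • (1 : A))}

/-- The ag-Drazin spectrum. -/
def agDrazinSpectrum {A : Type*} [NormedRing A] [NormedAlgebra ℂ A] (a : A) : Set ℂ :=
  {l : ℂ | ¬ IsAgDrazinInv (a - l • (1 : A))}

/-!
Both notions are read off the spectrum: `a` is generalized Drazin invertible iff `0` is not an
accumulation point of `σ(a)`, and ag-Drazin invertible iff `0` is not an accumulation point of the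
set of accumulation points of `σ(a)`. A commuting quasinilpotent perturbation leaves `σ(a)`
unchanged, so it preserves both of them.

For the implications from the spectrum to the inverse, take a circle around `0` that misses `σ(a)`
and let `e` be the integral of the resolvent over it. Then `e` is an idempotent that splits `a` into
the part `a e`, with spectrum inside the circle, and a part with spectrum outside, which is
inverted by the Cauchy transform of the resolvent. Conversely, if `x` commutes with `a` and
`x a x = x`, then near `0` the spectrum of `a` lies in that of `a - a² x`.
-/

open Metric
open scoped Real ENNReal NNReal Ring

section DerivedSet

variable {X : Type*}

lemma notMem_derivedSet_iff_eventually [TopologicalSpace X] {S : Set X} {x : X} :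
    x ∉ derivedSet S ↔ ∀ᶠ y in 𝓝[≠] x, y ∉ S := by
  rw [mem_derivedSet, accPt_iff_frequently_nhdsNE, not_frequently]

lemma exists_closedBall_inter_subset_of_notMem_derivedSet [PseudoMetricSpace X] {S : Set X} {c : X}
    (hc : c ∉ derivedSet S) : ∃ r > 0, closedBall c r ∩ S ⊆ {c} := by
  rw [notMem_derivedSet_iff_eventually, eventually_nhdsWithin_iff] at hc
  obtain ⟨r, hr, hball⟩ := nhds_basis_closedBall.eventually_iff.mp hc
  exact ⟨r, hr, fun y hy ↦ by_contra fun hne ↦ hball hy.1 hne hy.2⟩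

lemma exists_sphere_disjoint_of_notMem_derivedSet_derivedSet [PseudoMetricSpace X] [ProperSpace X]
    {S : Set X} (hS : IsClosed S) {c : X} (hc : c ∉ derivedSet (derivedSet S)) :
    ∃ r > 0, Disjoint (sphere c r) S ∧ closedBall c r ∩ derivedSet S ⊆ {c} := by
  obtain ⟨ε, hε, hball⟩ := exists_closedBall_inter_subset_of_notMem_derivedSet hc
  let K : Set X := (closedBall c ε \ ball c (ε / 2)) ∩ S
  have hKcompact : IsCompact K := ((isCompact_closedBall c ε).diff isOpen_ball).inter_right hS
  have hKfinite : K.Finite := by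
    by_contra hinf
    obtain ⟨z, hzK, hz⟩ := Set.Infinite.exists_accPt_of_subset_isCompact hinf hKcompact subset_rfl
    have hzS : z ∈ derivedSet S := derivedSet_mono _ _ Set.inter_subset_right hz
    obtain rfl : z = c := hball ⟨hzK.1.1, hzS⟩
    exact hzK.1.2 (mem_ball_self (half_pos hε))
  obtain ⟨r, ⟨hεr, hrε⟩, hr⟩ : ∃ r ∈ Set.Icc (ε / 2) ε, r ∉ (dist · c) '' K :=
    ((Set.Icc_infinite (half_lt_self hε)).sdiff (hKfinite.image _)).nonempty
  refine ⟨r, (half_pos hε).trans_le hεr, Set.disjoint_left.mpr fun z hz hzS ↦ hr ⟨z, ?_, hz⟩,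
    fun z hz ↦ hball ⟨closedBall_subset_closedBall hrε hz.1, hz.2⟩⟩
  have hdist : dist z c = r := hz
  exact ⟨⟨hdist.trans_le hrε, (hεr.trans_eq hdist.symm).not_gt⟩, hzS⟩

end DerivedSet

section Algebra

lemma commute_ringInverse_right {M : Type*} [MonoidWithZero M] {s t : M} (h : Commute t s) :
    Commute t s⁻¹ʳ := by
  by_cases hs : IsUnit s
  · obtain ⟨u, rfl⟩ := hs
    rw [Ring.inverse_unit]
    exact h.units_inv_right
  · rw [Ring.inverse_non_unit _ hs]
    exact Commute.zero_right t

variable {R A : Type*} [CommRing R] [Ring A] [Algebra R A] {a e x y t : A} {m z : R}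

lemma commute_algebraMap_sub (h : Commute t a) (z : R) : Commute t (algebraMap R A z - a) :=
  (Algebra.commute_algebraMap_right z t).sub_right h

lemma commute_resolvent (h : Commute t a) (z : R) : Commute t (resolvent a z) :=
  commute_ringInverse_right (commute_algebraMap_sub h z)

lemma algebraMap_sub_mul_resolvent_self (hz : z ∈ resolventSet R a) :
    (algebraMap R A z - a) * resolvent a z = 1 :=
  Ring.mul_inverse_cancel _ hz

lemma algebraMap_sub_mul_resolvent (hz : z ∈ resolventSet R a) (m : R) :
    (algebraMap R A m - a) * resolvent a z = 1 - (z - m) • resolvent a z := by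
  rw [← algebraMap_sub_mul_resolvent_self hz, Algebra.smul_def, ← sub_mul, map_sub]
  congr 1
  abel

lemma mem_resolventSet_of_mem_resolventSet_sub_sq_mul (hax : Commute a x) (hxax : x * a * x = x)
    (hz : z ∈ resolventSet R (a - a ^ 2 * x)) (hu : IsUnit (1 - z • x)) :
    z ∈ resolventSet R a := by
  set p := 1 - a * x with hp
  have hpidem : IsIdempotentElem p := by
    refine IsIdempotentElem.one_sub (?_ : a * x * (a * x) = a * x)
    rw [mul_assoc, ← mul_assoc x, hxax]
  have hap : Commute a p := (Commute.one_right a).sub_right ((Commute.refl a).mul_right hax)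
  have hau : Commute a (1 - z • x) := (Commute.one_right a).sub_right (hax.smul_right z)
  have hw : a - a ^ 2 * x = a * p := by rw [hp, mul_sub, mul_one, pow_two, mul_assoc]
  rw [hw] at hz
  have on_ker : (algebraMap R A z - a) * (p * resolvent (a * p) z) = p := by
    have : (algebraMap R A z - a) * p = p * (algebraMap R A z - a * p) := by
      rw [← (commute_algebraMap_sub hap.symm z).eq, mul_sub, mul_sub, ← mul_assoc p a, ← hap.eq,
        mul_assoc, hpidem.eq]
    rw [← mul_assoc, this, mul_assoc, algebraMap_sub_mul_resolvent_self hz, mul_one]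
  have on_range : (algebraMap R A z - a) * (x * (1 - z • x)⁻¹ʳ) = -(a * x) := by
    have : (algebraMap R A z - a) * x = -(a * x) * (1 - z • x) := by
      rw [sub_mul, ← Algebra.smul_def, mul_sub, mul_one, mul_smul_comm, neg_mul, hax.eq, hxax]
      module
    rw [← mul_assoc, this, mul_assoc, Ring.mul_inverse_cancel _ hu, mul_one]
  have hinv : (algebraMap R A z - a) * (p * resolvent (a * p) z - x * (1 - z • x)⁻¹ʳ) = 1 := by
    rw [mul_sub, on_ker, on_range, hp, sub_neg_eq_add, sub_add_cancel]
  have hcomm : Commute a (p * resolvent (a * p) z - x * (1 - z • x)⁻¹ʳ) :=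
    (hap.mul_right (commute_resolvent ((Commute.refl a).mul_right hap) z)).sub_right
      (hax.mul_right (commute_ringInverse_right hau))
  exact spectrum.mem_resolventSet_of_left_right_inverse hinv
    ((commute_algebraMap_sub hcomm.symm z).eq.trans hinv)

lemma mem_resolventSet_mul_of_algebraMap_sub_mul_eq {𝕜 : Type*} [Field 𝕜] [Algebra 𝕜 A] {m : 𝕜}
    (hm : m ≠ 0) (he : IsIdempotentElem e) (hae : Commute a e) (hay : Commute a y)
    (hey : Commute e y) (h : (algebraMap 𝕜 A m - a) * y = e) : m ∈ resolventSet 𝕜 (a * e) := by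
  have on_range : (algebraMap 𝕜 A m - a * e) * (e * y) = e := by
    calc (algebraMap 𝕜 A m - a * e) * (e * y)
        = (algebraMap 𝕜 A m - a) * y * e := by
          rw [mul_assoc _ y, ← hey.eq, ← mul_assoc, ← mul_assoc, sub_mul _ _ e, mul_assoc a, he.eq,
            ← sub_mul]
      _ = e := by rw [h, he.eq]
  have on_ker : (algebraMap 𝕜 A m - a * e) * (1 - e) = m • (1 - e) := by
    rw [sub_mul, mul_assoc a, he.mul_one_sub_self, mul_zero, sub_zero, Algebra.smul_def]
  have hinv : (algebraMap 𝕜 A m - a * e) * (e * y + m⁻¹ • (1 - e)) = 1 := by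
    rw [mul_add, on_range, mul_smul_comm, on_ker, inv_smul_smul₀ hm, add_sub_cancel]
  have hcomm : Commute (a * e) (e * y + m⁻¹ • (1 - e)) :=
    ((hae.mul_right hay).mul_left ((Commute.refl e).mul_right hey)).add_right
      (((Commute.one_right _).sub_right (hae.mul_left (Commute.refl e))).smul_right _)
  exact spectrum.mem_resolventSet_of_left_right_inverse hinv
    ((commute_algebraMap_sub hcomm.symm m).eq.trans hinv)

end Algebra

section SpectralRadius

lemma spectralRadius_ne_top (𝕜 : Type*) {A : Type*} [NormedField 𝕜] [NormedRing A]
    [NormedAlgebra 𝕜 A] [CompleteSpace A] (a : A) : spectralRadius 𝕜 a ≠ ∞ := by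
  refine ne_top_of_le_ne_top ?_ (spectrum.spectralRadius_le_pow_nnnorm_pow_one_div 𝕜 a 0)
  simp [ENNReal.mul_eq_top]

variable {A : Type*} [NormedRing A] [NormedAlgebra ℂ A] {a b : A}

lemma IsQuasinilpotent.spectralRadius_eq_zero (hb : IsQuasinilpotent b) :
    spectralRadius ℂ b = 0 := by
  rw [IsQuasinilpotent] at hb
  simp [spectralRadius, hb]

lemma IsQuasinilpotent.neg (hb : IsQuasinilpotent b) : IsQuasinilpotent (-b) := by
  rw [IsQuasinilpotent] at *
  rw [← spectrum.neg_eq, hb, Set.neg_singleton, neg_zero]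

lemma IsQuasinilpotent.nontrivial (hb : IsQuasinilpotent b) : Nontrivial A := by
  by_contra hA
  rw [not_nontrivial_iff_subsingleton] at hA
  exact Set.singleton_ne_empty 0 (hb.symm.trans (spectrum.of_subsingleton b))

variable [CompleteSpace A]

lemma spectralRadius_mul_le_of_commute (h : Commute a b) :
    spectralRadius ℂ (a * b) ≤ spectralRadius ℂ a * spectralRadius ℂ b := by
  refine le_of_tendsto_of_tendsto'
    (spectrum.pow_nnnorm_pow_one_div_tendsto_nhds_spectralRadius (a * b))
    (ENNReal.Tendsto.mul (spectrum.pow_nnnorm_pow_one_div_tendsto_nhds_spectralRadius a)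
      (.inr (spectralRadius_ne_top ℂ b))
      (spectrum.pow_nnnorm_pow_one_div_tendsto_nhds_spectralRadius b)
      (.inr (spectralRadius_ne_top ℂ a))) fun n ↦ ?_
  rw [h.mul_pow, ← ENNReal.mul_rpow_of_nonneg _ _ (by positivity)]
  gcongr
  exact_mod_cast nnnorm_mul_le _ _

lemma IsQuasinilpotent.isUnit_add {s : A} (hb : IsQuasinilpotent b) (hs : IsUnit s)
    (h : Commute s b) : IsUnit (s + b) := by
  obtain ⟨u, rfl⟩ := hs
  have hr : spectralRadius ℂ (-(↑u⁻¹ * b)) = 0 := by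
    rw [← mul_neg, ← nonpos_iff_eq_zero]
    simpa [hb.neg.spectralRadius_eq_zero] using
      spectralRadius_mul_le_of_commute h.units_inv_left.neg_right
  have hone : IsUnit (1 + ↑u⁻¹ * b) := by
    have : (1 : ℂ) ∈ resolventSet ℂ (-(↑u⁻¹ * b)) :=
      spectrum.mem_resolventSet_of_spectralRadius_lt (by simp [hr])
    simpa [spectrum.mem_resolventSet_iff] using this
  simpa [mul_add] using u.isUnit.mul hone

lemma IsQuasinilpotent.spectrum_add_subset (hb : IsQuasinilpotent b) (h : Commute a b) :
    spectrum ℂ (a + b) ⊆ spectrum ℂ a := by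
  refine Set.compl_subset_compl.mpr fun z hz ↦ ?_
  have := hb.neg.isUnit_add hz (commute_algebraMap_sub h.symm z).symm.neg_right
  rwa [spectrum.mem_resolventSet_iff, ← sub_sub, sub_eq_add_neg]

lemma IsQuasinilpotent.spectrum_add_eq (hb : IsQuasinilpotent b) (h : Commute a b) :
    spectrum ℂ (a + b) = spectrum ℂ a := by
  refine (hb.spectrum_add_subset h).antisymm ?_
  simpa using hb.neg.spectrum_add_subset (h.add_left (Commute.refl b)).neg_right

end SpectralRadius

section CircleIntegral

lemma map_circleIntegral {E F : Type*} [NormedAddCommGroup E] [NormedSpace ℂ E] [CompleteSpace E]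
    [NormedAddCommGroup F] [NormedSpace ℂ F] [CompleteSpace F] {f : ℂ → E} {c : ℂ} {r : ℝ}
    (L : E →L[ℂ] F) (hf : CircleIntegrable f c r) :
    L (∮ z in C(c, r), f z) = ∮ z in C(c, r), L (f z) := by
  simp only [circleIntegral, ← L.intervalIntegral_comp_comm hf.out, map_smul]

lemma circleIntegral_sub_inv_of_notMem_closedBall {c w : ℂ} {r : ℝ} (hr : 0 ≤ r)
    (hw : w ∉ closedBall c r) : (∮ z in C(c, r), (z - w)⁻¹) = 0 := by
  refine DiffContOnCl.circleIntegral_eq_zero hr (DifferentiableOn.diffContOnCl fun z hz ↦ ?_)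
  have hzw : z ≠ w := ne_of_mem_of_not_mem (closure_ball_subset_closedBall hz) hw
  exact ((differentiableAt_id.sub_const w).inv (sub_ne_zero.mpr hzw)).differentiableWithinAt

lemma differentiableOn_cauchyIntegral {E : Type*} [NormedAddCommGroup E] [NormedSpace ℂ E]
    [CompleteSpace E] {f : ℂ → E} {c : ℂ} {r : ℝ} (hf : CircleIntegrable f c r) :
    DifferentiableOn ℂ (fun w ↦ (2 * π * Complex.I : ℂ)⁻¹ • ∮ z in C(c, r), (z - w)⁻¹ • f z)
      (ball c r) := by
  rcases le_or_gt r 0 with hr | hr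
  · rw [ball_eq_empty.mpr hr]
    exact differentiableOn_empty
  lift r to ℝ≥0 using hr.le
  simpa [Metric.eball_coe] using
    (hasFPowerSeriesOn_cauchy_integral hf (by exact_mod_cast hr)).differentiableOn

variable {A : Type*} [NormedRing A] [NormedAlgebra ℂ A] [CompleteSpace A] {f : ℂ → A} {c : ℂ}
  {r : ℝ}

lemma mul_circleIntegral (t : A) (hf : CircleIntegrable f c r) :
    t * ∮ z in C(c, r), f z = ∮ z in C(c, r), t * f z :=
  map_circleIntegral (ContinuousLinearMap.mul ℂ A t) hf

lemma circleIntegral_mul (t : A) (hf : CircleIntegrable f c r) :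
    (∮ z in C(c, r), f z) * t = ∮ z in C(c, r), f z * t :=
  map_circleIntegral ((ContinuousLinearMap.mul ℂ A).flip t) hf

lemma commute_circleIntegral {t : A} (h : ∀ z, Commute t (f z)) :
    Commute t (∮ z in C(c, r), f z) := by
  by_cases hf : CircleIntegrable f c r
  · rw [commute_iff_eq, mul_circleIntegral t hf, circleIntegral_mul t hf]
    simp only [(h _).eq]
  · rw [circleIntegral.integral_undef hf]
    exact Commute.zero_right t

end CircleIntegral

section RieszProjection

lemma continuousOn_resolvent {𝕜 A : Type*} [NontriviallyNormedField 𝕜] [NormedRing A]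
    [NormedAlgebra 𝕜 A] [CompleteSpace A] (a : A) :
    ContinuousOn (resolvent a) (resolventSet 𝕜 a) := fun _ hz ↦
  (spectrum.hasDerivAt_resolvent_const_left hz).continuousAt.continuousWithinAt

variable {A : Type*} [NormedRing A] [NormedAlgebra ℂ A] {a t : A} {c m : ℂ} {r s : ℝ}

/-- The Riesz projection of `a` for the circle of centre `c` and radius `r`: when the circle misses
the spectrum of `a`, it is the spectral idempotent of the part of the spectrum inside the circle. -/
noncomputable def rieszProjection (a : A) (c : ℂ) (r : ℝ) : A :=
  (2 * π * Complex.I : ℂ)⁻¹ • ∮ z in C(c, r), resolvent a z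

/-- The Cauchy transform of the resolvent of `a` along the circle of centre `c` and radius `r`. At
`m` off the circle it inverts `m - a` up to sign on the spectral subspace of `a` on the side of the
circle opposite to `m`, and vanishes on the other one. -/
noncomputable def resolventCauchyTransform (a : A) (c : ℂ) (r : ℝ) (m : ℂ) : A :=
  (2 * π * Complex.I : ℂ)⁻¹ • ∮ z in C(c, r), (z - m)⁻¹ • resolvent a z

variable [CompleteSpace A]

lemma commute_rieszProjection (h : Commute t a) (c : ℂ) (r : ℝ) :
    Commute t (rieszProjection a c r) :=
  (commute_circleIntegral fun z ↦ commute_resolvent h z).smul_right _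

lemma commute_resolventCauchyTransform (h : Commute t a) (c : ℂ) (r : ℝ) (m : ℂ) :
    Commute t (resolventCauchyTransform a c r m) :=
  (commute_circleIntegral fun z ↦ (commute_resolvent h z).smul_right _).smul_right _

lemma circleIntegrable_resolvent (hr : 0 ≤ r) (h : sphere c r ⊆ resolventSet ℂ a) :
    CircleIntegrable (resolvent a) c r :=
  ((continuousOn_resolvent a).mono h).circleIntegrable hr

lemma algebraMap_sub_mul_resolventCauchyTransform (hr : 0 ≤ r)
    (h : sphere c r ⊆ resolventSet ℂ a) (hm : m ∉ sphere c r) :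
    (algebraMap ℂ A m - a) * resolventCauchyTransform a c r m =
      ((2 * π * Complex.I : ℂ)⁻¹ * ∮ z in C(c, r), (z - m)⁻¹) • 1 - rieszProjection a c r := by
  have hne {z : ℂ} (hz : z ∈ sphere c r) : z - m ≠ 0 := sub_ne_zero.mpr (ne_of_mem_of_not_mem hz hm)
  have hcont : ContinuousOn (fun z ↦ (z - m)⁻¹) (sphere c r) :=
    (continuous_id.sub continuous_const).continuousOn.inv₀ fun z hz ↦ hne hz
  have hint : CircleIntegrable (fun z ↦ (z - m)⁻¹ • resolvent a z) c r :=
    (hcont.smul ((continuousOn_resolvent a).mono h)).circleIntegrable hr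
  have hint_one : CircleIntegrable (fun z ↦ (z - m)⁻¹ • (1 : A)) c r :=
    (hcont.smul continuousOn_const).circleIntegrable hr
  have hpoint : Set.EqOn (fun z ↦ (algebraMap ℂ A m - a) * (z - m)⁻¹ • resolvent a z)
      (fun z ↦ (z - m)⁻¹ • (1 : A) - resolvent a z) (sphere c r) := fun z hz ↦ by
    simp only [mul_smul_comm, algebraMap_sub_mul_resolvent (h hz), smul_sub,
      inv_smul_smul₀ (hne hz)]
  rw [resolventCauchyTransform, rieszProjection, mul_smul_comm, mul_circleIntegral _ hint,
    circleIntegral.integral_congr hr hpoint,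
    circleIntegral.integral_sub hint_one (circleIntegrable_resolvent hr h),
    circleIntegral.integral_smul_const, smul_sub, smul_smul]

lemma algebraMap_sub_mul_resolventCauchyTransform_of_mem_ball
    (h : sphere c r ⊆ resolventSet ℂ a) (hm : m ∈ ball c r) :
    (algebraMap ℂ A m - a) * resolventCauchyTransform a c r m = 1 - rieszProjection a c r := by
  have hr : 0 < r := dist_nonneg.trans_lt hm
  rw [algebraMap_sub_mul_resolventCauchyTransform hr.le h
      fun hm' ↦ (mem_ball.mp hm).ne (mem_sphere.mp hm'),
    circleIntegral.integral_sub_inv_of_mem_ball hm, inv_mul_cancel₀ Complex.two_pi_I_ne_zero,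
    one_smul]

lemma algebraMap_sub_mul_resolventCauchyTransform_of_notMem_closedBall (hr : 0 ≤ r)
    (h : sphere c r ⊆ resolventSet ℂ a) (hm : m ∉ closedBall c r) :
    (algebraMap ℂ A m - a) * resolventCauchyTransform a c r m = -rieszProjection a c r := by
  rw [algebraMap_sub_mul_resolventCauchyTransform hr h fun hm' ↦ hm (sphere_subset_closedBall hm'),
    circleIntegral_sub_inv_of_notMem_closedBall hr hm, mul_zero, zero_smul, zero_sub]

lemma rieszProjection_eq_of_annulus_subset (hs : 0 < s) (hsr : s ≤ r)
    (h : closedBall c r \ ball c s ⊆ resolventSet ℂ a) :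
    rieszProjection a c r = rieszProjection a c s := by
  rw [rieszProjection, rieszProjection,
    Complex.circleIntegral_eq_of_differentiable_on_annulus_off_countable hs hsr Set.countable_empty
      ((continuousOn_resolvent a).mono h) fun z hz ↦ ?_]
  have hz' : z ∈ closedBall c r \ ball c s :=
    ⟨ball_subset_closedBall hz.1.1, fun hzs ↦ hz.1.2 (ball_subset_closedBall hzs)⟩
  exact (spectrum.hasDerivAt_resolvent_const_left (h hz')).differentiableAt

lemma exists_annulus_subset_resolventSet (hr : 0 < r) (h : sphere c r ⊆ resolventSet ℂ a) :
    ∃ s ∈ Set.Ioo 0 r, closedBall c r \ ball c s ⊆ resolventSet ℂ a := by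
  have hsubset : spectrum ℂ a ∩ closedBall c r ⊆ ball c r := fun z hz ↦
    lt_of_le_of_ne hz.2 fun hzr ↦ hz.1 (h hzr)
  obtain ⟨s, hs, hball⟩ :=
    exists_pos_lt_subset_ball hr ((spectrum.isClosed a).inter isClosed_closedBall) hsubset
  exact ⟨s, hs, fun z hz ↦ by_contra fun hza ↦ hz.2 (hball ⟨hza, hz.1⟩)⟩

lemma isIdempotentElem_rieszProjection (hr : 0 < r) (h : sphere c r ⊆ resolventSet ℂ a) :
    IsIdempotentElem (rieszProjection a c r) := by
  -- The Cauchy transform is holomorphic inside the circle, so its integral over a smaller circle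
  -- vanishes; there it equals `R(z) (1 - e)`, whose integral is a multiple of `e (1 - e)`.
  obtain ⟨s, ⟨hs, hsr⟩, hannulus⟩ := exists_annulus_subset_resolventSet hr h
  have hsphere : sphere c s ⊆ resolventSet ℂ a := fun z hz ↦
    hannulus ⟨(mem_sphere.mp hz).trans_le hsr.le, (mem_sphere.mp hz).not_lt⟩
  set e := rieszProjection a c r with he
  have hcauchy : ∮ z in C(c, s), resolventCauchyTransform a c r z = 0 :=
    ((differentiableOn_cauchyIntegral (circleIntegrable_resolvent hr.le h)).mono
      (closedBall_subset_ball hsr)).diffContOnCl_ball subset_rfl |>.circleIntegral_eq_zero hs.le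
  have hpoint : Set.EqOn (resolventCauchyTransform a c r) (fun z ↦ resolvent a z * (1 - e))
      (sphere c s) := fun z hz ↦ by
    have hz' : z ∈ ball c r := sphere_subset_ball hsr hz
    simp only [he, ← algebraMap_sub_mul_resolventCauchyTransform_of_mem_ball h hz']
    rw [← mul_assoc, resolvent, Ring.inverse_mul_cancel _ (hsphere hz), one_mul]
  have hes : e = rieszProjection a c s := rieszProjection_eq_of_annulus_subset hs hsr.le hannulus
  have hzero : e * (1 - e) = 0 :=
    calc e * (1 - e)
        = (2 * π * Complex.I : ℂ)⁻¹ • ∮ z in C(c, s), resolvent a z * (1 - e) := by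
          rw [← circleIntegral_mul _ (circleIntegrable_resolvent hs.le hsphere), ← smul_mul_assoc,
            ← rieszProjection, ← hes]
      _ = 0 := by rw [← circleIntegral.integral_congr hs.le hpoint, hcauchy, smul_zero]
  rw [mul_sub, mul_one, sub_eq_zero] at hzero
  exact hzero.symm

lemma spectrum_mul_rieszProjection_subset (hr : 0 < r) (h : sphere c r ⊆ resolventSet ℂ a) :
    spectrum ℂ (a * rieszProjection a c r) ⊆ insert 0 (spectrum ℂ a ∩ ball c r) := by
  intro m hm
  by_contra hmem
  simp only [Set.mem_insert_iff, Set.mem_inter_iff, not_or, not_and] at hmem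
  obtain ⟨hm0, hball⟩ := hmem
  have hae : Commute a (rieszProjection a c r) := commute_rieszProjection (Commute.refl a) c r
  obtain ⟨y, hay, hey, hy⟩ : ∃ y, Commute a y ∧ Commute (rieszProjection a c r) y ∧
      (algebraMap ℂ A m - a) * y = rieszProjection a c r := by
    by_cases hma : m ∈ resolventSet ℂ a
    · refine ⟨resolvent a m * rieszProjection a c r,
        (commute_resolvent (Commute.refl a) m).mul_right hae,
        (commute_resolvent hae.symm m).mul_right (Commute.refl _), ?_⟩
      rw [← mul_assoc, algebraMap_sub_mul_resolvent_self hma, one_mul]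
    · have hm' : m ∉ closedBall c r := fun hm' ↦ hball hma
        (lt_of_le_of_ne hm' fun hmr ↦ hma (h hmr))
      refine ⟨-resolventCauchyTransform a c r m,
        (commute_resolventCauchyTransform (Commute.refl a) c r m).neg_right,
        (commute_resolventCauchyTransform hae.symm c r m).neg_right, ?_⟩
      rw [mul_neg, algebraMap_sub_mul_resolventCauchyTransform_of_notMem_closedBall hr.le h hm',
        neg_neg]
  exact hm (mem_resolventSet_mul_of_algebraMap_sub_mul_eq hm0
    (isIdempotentElem_rieszProjection hr h) hae hay hey hy)

lemma exists_outerInverse_of_sphere_subset_resolventSet (hr : 0 < r)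
    (h : sphere 0 r ⊆ resolventSet ℂ a) : ∃ x, a * x = x * a ∧ x * a * x = x ∧
      spectrum ℂ (a - a ^ 2 * x) ⊆ insert 0 (spectrum ℂ a ∩ ball 0 r) := by
  set e := rieszProjection a 0 r
  set y := resolventCauchyTransform a 0 r 0
  have hidem : IsIdempotentElem (1 - e) := (isIdempotentElem_rieszProjection hr h).one_sub
  have hae : Commute a (1 - e) :=
    (Commute.one_right a).sub_right (commute_rieszProjection (Commute.refl a) 0 r)
  have hay : Commute a y := commute_resolventCauchyTransform (Commute.refl a) 0 r 0
  have hax : a * ((1 - e) * -y) = 1 - e := by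
    have := algebraMap_sub_mul_resolventCauchyTransform_of_mem_ball h (mem_ball_self hr)
    rw [map_zero, zero_sub, neg_mul, ← mul_neg] at this
    rw [← mul_assoc, hae.eq, mul_assoc, this, hidem.eq]
  have hcomm : Commute a ((1 - e) * -y) := hae.mul_right hay.neg_right
  refine ⟨(1 - e) * -y, hcomm.eq, ?_, ?_⟩
  · rw [← hcomm.eq, hax, ← mul_assoc, hidem.eq]
  · rw [pow_two, mul_assoc, hax, mul_sub, mul_one, sub_sub_cancel]
    exact spectrum_mul_rieszProjection_subset hr h

end RieszProjection

section DrazinSpectrum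

variable {A : Type*} [NormedRing A] [NormedAlgebra ℂ A] {a x : A}

lemma zero_mem_derivedSet_spectrum_sub_smul_one_iff {l : ℂ} :
    0 ∈ derivedSet (spectrum ℂ (a - l • (1 : A))) ↔ l ∈ derivedSet (spectrum ℂ a) := by
  have hspec : spectrum ℂ (a - l • (1 : A)) = Homeomorph.addRight l ⁻¹' spectrum ℂ a := by
    ext z
    simp [spectrum.mem_iff, Algebra.algebraMap_eq_smul_one, add_smul, sub_sub_eq_add_sub]
  have := (Homeomorph.addRight l).isOpenEmbedding.accPt_comap_iff (x := 0)
    (l := 𝓟 (spectrum ℂ a))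
  simpa [mem_derivedSet, hspec] using this

variable [CompleteSpace A]

lemma eventually_mem_spectrum_sub_sq_mul_of_mem_spectrum (hax : Commute a x)
    (hxax : x * a * x = x) :
    ∀ᶠ z in 𝓝 (0 : ℂ), z ∈ spectrum ℂ a → z ∈ spectrum ℂ (a - a ^ 2 * x) := by
  have hcont : Tendsto (fun z : ℂ ↦ 1 - z • x) (𝓝 0) (𝓝 1) := by
    have : Continuous fun z : ℂ ↦ 1 - z • x := by fun_prop
    simpa using this.tendsto 0
  filter_upwards [hcont (Units.isOpen.mem_nhds isUnit_one)] with z hu hz hzw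
  exact hz (mem_resolventSet_of_mem_resolventSet_sub_sq_mul hax hxax hzw hu)

variable [Nontrivial A]

lemma isGDrazinInv_iff_zero_notMem_derivedSet_spectrum :
    IsGDrazinInv a ↔ 0 ∉ derivedSet (spectrum ℂ a) := by
  constructor
  · rintro ⟨x, hax, hxax, hw⟩
    rw [notMem_derivedSet_iff_eventually, eventually_nhdsWithin_iff]
    filter_upwards [eventually_mem_spectrum_sub_sq_mul_of_mem_spectrum hax hxax] with z hz hz0 hza
    exact hz0 (hw ▸ hz hza)
  · intro h
    obtain ⟨r, hr, hball⟩ := exists_closedBall_inter_subset_of_notMem_derivedSet h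
    have hsphere : sphere 0 r ⊆ resolventSet ℂ a := fun z hz ↦ by_contra fun hza ↦
      ne_of_mem_sphere hz hr.ne' (hball ⟨sphere_subset_closedBall hz, hza⟩)
    obtain ⟨x, hax, hxax, hw⟩ := exists_outerInverse_of_sphere_subset_resolventSet hr hsphere
    have hsubset : spectrum ℂ a ∩ ball 0 r ⊆ {0} := fun z hz ↦
      hball ⟨ball_subset_closedBall hz.2, hz.1⟩
    exact ⟨x, hax, hxax, (spectrum.nonempty _).subset_singleton_iff.mp
      (hw.trans (Set.insert_subset rfl hsubset))⟩

lemma memAcc_iff_derivedSet_spectrum_subset :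
    MemAcc a ↔ derivedSet (spectrum ℂ a) ⊆ {0} := by
  simp only [MemAcc, isGDrazinInv_iff_zero_notMem_derivedSet_spectrum,
    zero_mem_derivedSet_spectrum_sub_smul_one_iff]
  exact forall_congr' fun l ↦ not_imp_not

lemma isAgDrazinInv_iff_zero_notMem_derivedSet_derivedSet_spectrum :
    IsAgDrazinInv a ↔ 0 ∉ derivedSet (derivedSet (spectrum ℂ a)) := by
  constructor
  · rintro ⟨x, hax, hxax, hw⟩
    rw [memAcc_iff_derivedSet_spectrum_subset] at hw
    rw [notMem_derivedSet_iff_eventually, eventually_nhdsWithin_iff]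
    filter_upwards [eventually_eventually_nhds.mpr
      (eventually_mem_spectrum_sub_sq_mul_of_mem_spectrum hax hxax)] with l hl hl0 hla
    rw [mem_derivedSet, accPt_iff_frequently_nhdsNE] at hla
    exact hl0 (hw (accPt_iff_frequently_nhdsNE.mpr
      (hla.mp (hl.filter_mono nhdsWithin_le_nhds))))
  · intro h
    obtain ⟨r, hr, hdisj, hball⟩ :=
      exists_sphere_disjoint_of_notMem_derivedSet_derivedSet (spectrum.isClosed a) h
    have hsphere : sphere 0 r ⊆ resolventSet ℂ a := fun z hz ↦
      by_contra (Set.disjoint_left.mp hdisj hz)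
    obtain ⟨x, hax, hxax, hw⟩ := exists_outerInverse_of_sphere_subset_resolventSet hr hsphere
    refine ⟨x, hax, hxax, memAcc_iff_derivedSet_spectrum_subset.mpr fun l hl ↦ ?_⟩
    have hl' : l ∈ derivedSet ({0} ∪ spectrum ℂ a ∩ ball 0 r) := derivedSet_mono _ _ hw hl
    rw [derivedSet_union] at hl'
    rcases hl' with hzero | hinside
    · simpa using derivedSet_subset_closure _ hzero
    · have hl_closedBall : l ∈ closedBall 0 r := closure_ball_subset_closedBall
        (closure_mono Set.inter_subset_right (derivedSet_subset_closure _ hinside))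
      exact hball ⟨hl_closedBall, derivedSet_mono _ _ Set.inter_subset_left hinside⟩

end DrazinSpectrum

theorem agDrazin_add_quasinilpotent {A : Type*} [NormedRing A] [NormedAlgebra ℂ A]
    [CompleteSpace A] (a b : A) (ha : IsAgDrazinInv a) (hb : IsQuasinilpotent b)
    (hcomm : a * b = b * a) :
    IsAgDrazinInv (a + b) := by
  have : Nontrivial A := hb.nontrivial
  rw [isAgDrazinInv_iff_zero_notMem_derivedSet_derivedSet_spectrum] at ha ⊢
  rwa [hb.spectrum_add_eq hcomm]
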